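/- Let n be a positive integer and, for each i ∈ {1,…,n}, let R_i ⊆ S_i be an FCP ring extension; set R := ∏_{i=1}^n R_i and S := ∏_{i=1}^n S_i with the componentwise inclusion, which is an FCP extension. Then R ⊆ S is catenarian if and only if R_i ⊆ S_i is catenarian for each i; moreover, in that case ℓ[R,S] = Σ_{i=1}^n ℓ[R_i,S_i]. -/

import Mathlib

/-!
The `R`-subalgebras of `∏ Sᵢ` (for `R = ∏ Rᵢ`) are exactly the products `∏ Tᵢ` of `Rᵢ`-subalgebras
`Tᵢ` of `Sᵢ`, because `R` contains the idempotents of the decomposition (`piSubalgebraEquiv`).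
The statement thus becomes one about a finite product of orders in which all chains are finite.

A covering in a product of orders changes exactly one coordinate, and does so by a covering.
Hence a maximal chain in the product splits into maximal chains of the factors whose lengths add up
(`CovChain.pi_split`), which gives the backward implication and the length formula. Conversely, two
maximal chains of different lengths in the `i`-th factor embed in the product with all the other
coordinates equal to `⊥`; prolonging both by the same maximal chain up to `⊤` gives two maximal
chains of different lengths in the product (`catenarian_of_pi`).

The length in the sense of `extLength` is a supremum over strict chains; since a strict chain refines
to a maximal one, it is the common length of the maximal chains when the order is catenarian
(`extLength_eq`).
-/

/-- A maximal chain of length `n` from `T` to `U`: each step is a covering. -/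
def IsMaxChainFromTo {α : Type*} [PartialOrder α] (T U : α) (n : ℕ)
    (c : Fin (n + 1) → α) : Prop :=
  c 0 = T ∧ c (Fin.last n) = U ∧ ∀ i : Fin n, c i.castSucc ⋖ c i.succ

/-- The subextension determined by `T ≤ U` is catenarian: all maximal chains from
`T` to `U` have the same length. -/
def IsCatenarianFromTo {α : Type*} [PartialOrder α] (T U : α) : Prop :=
  ∀ (n m : ℕ) (c : Fin (n + 1) → α) (d : Fin (m + 1) → α),
    IsMaxChainFromTo T U n c → IsMaxChainFromTo T U m d → n = m

/-- The extension `R ⊆ S` has FCP: every chain of `R`-subalgebras of `S` is finite. -/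
def IsFCPExt (R S : Type*) [CommRing R] [CommRing S] [Algebra R S] : Prop :=
  ∀ C : Set (Subalgebra R S), IsChain (· ≤ ·) C → C.Finite

/-- The extension `R ⊆ S` is catenarian. -/
def IsCatenarianExt (R S : Type*) [CommRing R] [CommRing S] [Algebra R S] : Prop :=
  IsCatenarianFromTo (⊥ : Subalgebra R S) ⊤

/-- The length `ℓ[T,U]`: the supremum of lengths of chains from `T` to `U`. -/
noncomputable def extLength {α : Type*} [PartialOrder α] (T U : α) : ℕ :=
  sSup {n | ∃ c : Fin (n + 1) → α, StrictMono c ∧ c 0 = T ∧ c (Fin.last n) = U}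

/-! ### Chains of coverings -/

/-- `CovChain a b n`: there is a chain of `n` successive coverings from `a` to `b`. This is the
inductive form of the existence of a chain satisfying `IsMaxChainFromTo a b n`. -/
inductive CovChain {α : Type*} [PartialOrder α] (a : α) : α → ℕ → Prop
  | refl : CovChain a a 0
  | tail {b c : α} {n : ℕ} : CovChain a b n → b ⋖ c → CovChain a c (n + 1)

theorem CovChain.trans {α : Type*} [PartialOrder α] {a b c : α} {n m : ℕ}
    (h : CovChain a b n) (h' : CovChain b c m) : CovChain a c (n + m) := by
  induction h' with
  | refl => exact h
  | tail _ hc ih => exact ih.tail hc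

theorem CovChain.map {α β : Type*} [PartialOrder α] [PartialOrder β] {f : α → β}
    (hf : ∀ x y, x ⋖ y → f x ⋖ f y) {a b : α} {n : ℕ} (h : CovChain a b n) :
    CovChain (f a) (f b) n := by
  induction h with
  | refl => exact .refl
  | tail _ hc ih => exact ih.tail (hf _ _ hc)

theorem covChain_iff {α : Type*} [PartialOrder α] {a b : α} {n : ℕ} :
    CovChain a b n ↔ ∃ c, IsMaxChainFromTo a b n c := by
  constructor
  · intro h
    induction h with
    | refl => exact ⟨fun _ => a, rfl, rfl, fun i => i.elim0⟩
    | @tail b d n _ hc ih =>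
      obtain ⟨c, h0, h1, h2⟩ := ih
      refine ⟨Fin.snoc (α := fun _ => α) c d, ?_, by simp, fun i => ?_⟩
      · rw [← Fin.castSucc_zero, Fin.snoc_castSucc, h0]
      · induction i using Fin.lastCases with
        | last =>
          rw [Fin.snoc_castSucc, Fin.succ_last, Fin.snoc_last, h1]
          exact hc
        | cast i =>
          rw [Fin.snoc_castSucc, Fin.succ_castSucc, Fin.snoc_castSucc]
          exact h2 i
  · rintro ⟨c, rfl, rfl, h2⟩
    have key : ∀ i : Fin (n + 1), CovChain (c 0) (c i) i := by
      intro i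
      induction i using Fin.induction with
      | zero => exact .refl
      | succ i ih => exact ih.tail (h2 i)
    simpa using key (Fin.last n)

theorem isCatenarianFromTo_iff {α : Type*} [PartialOrder α] {a b : α} :
    IsCatenarianFromTo a b ↔ ∀ n m, CovChain a b n → CovChain a b m → n = m := by
  simp only [covChain_iff]
  exact ⟨fun h n m ⟨c, hc⟩ ⟨d, hd⟩ => h n m c d hc hd,
    fun h n m c d hc hd => h n m ⟨c, hc⟩ ⟨d, hd⟩⟩

theorem exists_covChain {α : Type*} [PartialOrder α] [WellFoundedLT α] [WellFoundedGT α]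
    {a b : α} (hab : a ≤ b) : ∃ n, CovChain a b n := by
  induction a using WellFoundedGT.induction with
  | ind a ih =>
    rcases hab.eq_or_lt with rfl | hlt
    · exact ⟨0, .refl⟩
    · obtain ⟨x, hx, hxb⟩ := exists_covBy_le_of_lt hlt
      obtain ⟨n, hn⟩ := ih x hx.lt hxb
      exact ⟨_, (CovChain.refl.tail hx).trans hn⟩

/-- A strict chain refines to a maximal one, which is at least as long. -/
theorem exists_covChain_of_strictMono {α : Type*} [PartialOrder α] [WellFoundedLT α]
    [WellFoundedGT α] {n : ℕ} {c : Fin (n + 1) → α} (hc : StrictMono c) :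
    ∃ m, n ≤ m ∧ CovChain (c 0) (c (Fin.last n)) m := by
  have key : ∀ i : Fin (n + 1), ∃ m, (i : ℕ) ≤ m ∧ CovChain (c 0) (c i) m := by
    intro i
    induction i using Fin.induction with
    | zero => exact ⟨0, le_rfl, .refl⟩
    | succ i ih =>
      obtain ⟨m, hm, hch⟩ := ih
      have hlt : c i.castSucc < c i.succ := hc Fin.castSucc_lt_succ
      obtain ⟨x, hx, hxb⟩ := exists_covBy_le_of_lt hlt
      obtain ⟨k, hk⟩ := exists_covChain hxb
      refine ⟨m + 1 + k, ?_, (hch.tail hx).trans hk⟩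
      simp only [Fin.val_castSucc, Fin.val_succ] at hm ⊢
      omega
  simpa using key (Fin.last n)

theorem IsMaxChainFromTo.strictMono {α : Type*} [PartialOrder α] {a b : α} {n : ℕ} {c : Fin (n + 1) → α}
    (h : IsMaxChainFromTo a b n c) : StrictMono c :=
  Fin.strictMono_iff_lt_succ.2 fun i => (h.2.2 i).lt

theorem extLength_eq {α : Type*} [PartialOrder α] [WellFoundedLT α] [WellFoundedGT α]
    {a b : α} {n : ℕ} (hcat : IsCatenarianFromTo a b) (h : CovChain a b n) :
    extLength a b = n := by
  refine IsGreatest.csSup_eq ⟨?_, ?_⟩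
  · obtain ⟨c, hc⟩ := covChain_iff.1 h
    exact ⟨c, hc.strictMono, hc.1, hc.2.1⟩
  · rintro k ⟨c, hc, rfl, rfl⟩
    obtain ⟨m, hm, hch⟩ := exists_covChain_of_strictMono hc
    exact hm.trans (isCatenarianFromTo_iff.1 hcat _ _ hch h).le

theorem OrderIso.catenarian_iff {α β : Type*} [PartialOrder α] [PartialOrder β] (e : α ≃o β)
    {a b : α} : IsCatenarianFromTo (e a) (e b) ↔ IsCatenarianFromTo a b := by
  have h : ∀ n, CovChain (e a) (e b) n ↔ CovChain a b n := fun n =>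
    ⟨fun h => by
      simpa using h.map (f := e.symm) fun x y hxy => (apply_covBy_apply_iff e.symm).2 hxy,
    fun h => h.map fun x y hxy => (apply_covBy_apply_iff e).2 hxy⟩
  simp only [isCatenarianFromTo_iff, h]

/-! ### Finite products of orders -/

theorem pi_wellFoundedGT {ι : Type*} [Finite ι] {α : ι → Type*} [∀ i, PartialOrder (α i)]
    [∀ i, WellFoundedGT (α i)] : WellFoundedGT (∀ i, α i) :=
  ⟨(inferInstance : WellFoundedLT (∀ i, (α i)ᵒᵈ)).wf⟩

/-- A maximal chain in a product splits into maximal chains of the factors; the lengths add up. -/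
theorem CovChain.pi_split {ι : Type*} [Fintype ι] {α : ι → Type*}
    [∀ i, PartialOrder (α i)] {a b : ∀ i, α i} {n : ℕ} (h : CovChain a b n) :
    ∃ f : ι → ℕ, (∀ i, CovChain (a i) (b i) (f i)) ∧ ∑ i, f i = n := by
  classical
  induction h with
  | refl => exact ⟨0, fun i => .refl, by simp⟩
  | @tail b c n _ hc ih =>
    obtain ⟨f, hf, hsum⟩ := ih
    obtain ⟨i, hi, hne⟩ := Pi.covBy_iff.1 hc
    refine ⟨f + Pi.single i 1, fun j => ?_, by simp [Finset.sum_add_distrib, hsum]⟩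
    rcases eq_or_ne j i with rfl | hj
    · simpa using (hf j).tail hi
    · simpa [hj, ← hne j hj] using hf j

theorem catenarian_of_pi {ι : Type*} [Fintype ι] {α : ι → Type*} [∀ i, PartialOrder (α i)]
    [∀ i, BoundedOrder (α i)] [∀ i, WellFoundedLT (α i)] [∀ i, WellFoundedGT (α i)]
    (h : IsCatenarianFromTo (⊥ : ∀ i, α i) ⊤) (i : ι) :
    IsCatenarianFromTo (⊥ : α i) ⊤ := by
  classical
  have : WellFoundedGT (∀ i, α i) := pi_wellFoundedGT
  rw [isCatenarianFromTo_iff] at h ⊢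
  intro n m hn hm
  obtain ⟨k, hk⟩ := exists_covChain (le_top : Function.update (⊥ : ∀ i, α i) i ⊤ ≤ ⊤)
  have lift : ∀ n, CovChain (⊥ : α i) ⊤ n → CovChain (⊥ : ∀ i, α i) ⊤ (n + k) := by
    intro n hn
    have h1 := hn.map (f := Function.update (⊥ : ∀ i, α i) i) fun x y hxy =>
      Pi.covBy_iff.2 ⟨i, by simpa using hxy, fun j hj => by simp [hj]⟩
    rw [show Function.update (⊥ : ∀ i, α i) i ⊥ = ⊥ from Function.update_eq_self i ⊥] at h1
    exact h1.trans hk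
  exact Nat.add_right_cancel (h _ _ (lift n hn) (lift m hm))

theorem catenarian_pi {ι : Type*} [Fintype ι] {α : ι → Type*} [∀ i, PartialOrder (α i)]
    {a b : ∀ i, α i} (h : ∀ i, IsCatenarianFromTo (a i) (b i)) : IsCatenarianFromTo a b := by
  rw [isCatenarianFromTo_iff]
  intro n m hn hm
  obtain ⟨f, hf, rfl⟩ := hn.pi_split
  obtain ⟨g, hg, rfl⟩ := hm.pi_split
  exact Finset.sum_congr rfl fun i _ => isCatenarianFromTo_iff.1 (h i) _ _ (hf i) (hg i)

theorem extLength_pi {ι : Type*} [Fintype ι] {α : ι → Type*} {β : Type*} [PartialOrder β]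
    [BoundedOrder β] [∀ i, PartialOrder (α i)]
    [∀ i, BoundedOrder (α i)] [∀ i, WellFoundedLT (α i)] [∀ i, WellFoundedGT (α i)]
    (e : β ≃o ∀ i, α i) (h : IsCatenarianFromTo (⊥ : β) ⊤)
    (h' : ∀ i, IsCatenarianFromTo (⊥ : α i) ⊤) :
    extLength (⊥ : β) ⊤ = ∑ i, extLength (⊥ : α i) ⊤ := by
  have : WellFoundedLT β := e.strictMono.wellFoundedLT
  have : WellFoundedGT (∀ i, α i) := pi_wellFoundedGT
  have : WellFoundedGT β := e.strictMono.wellFoundedGT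
  obtain ⟨n, hn⟩ := exists_covChain (bot_le : (⊥ : β) ≤ ⊤)
  have hn' := hn.map (f := e) fun x y hxy => (apply_covBy_apply_iff e).2 hxy
  rw [map_bot, map_top] at hn'
  obtain ⟨f, hf, rfl⟩ := hn'.pi_split
  rw [extLength_eq h hn]
  exact Finset.sum_congr rfl fun i _ => (extLength_eq (h' i) (hf i)).symm

/-! ### Subalgebras of a product -/

/-- Subalgebras of `∏ Sᵢ` over `∏ Rᵢ` correspond to families of `Rᵢ`-subalgebras of `Sᵢ`. The
`i`-th component of `A` is encoded as the set of `x` such that `Pi.single i x ∈ A`. -/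
def piSubalgebraEquiv {ι : Type*} [Fintype ι] [DecidableEq ι] (R S : ι → Type*)
    [∀ i, CommRing (R i)] [∀ i, CommRing (S i)] [∀ i, Algebra (R i) (S i)]
    [Algebra (∀ i, R i) (∀ i, S i)]
    (halg : ∀ (r : ∀ i, R i) (i : ι),
      algebraMap (∀ i, R i) (∀ i, S i) r i = algebraMap (R i) (S i) (r i)) :
    Subalgebra (∀ i, R i) (∀ i, S i) ≃o ∀ i, Subalgebra (R i) (S i) :=
  have hsingle : ∀ (i : ι) (r : R i), algebraMap (∀ i, R i) (∀ i, S i) (Pi.single i r) =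
      Pi.single i (algebraMap (R i) (S i) r) := fun i r => by
    ext j
    rw [halg]
    rcases eq_or_ne j i with rfl | hj
    · simp
    · simp [hj]
  have hmem : ∀ (A : Subalgebra (∀ i, R i) (∀ i, S i)) (x : ∀ i, S i),
      (∀ i, Pi.single i (x i) ∈ A) ↔ x ∈ A := fun A x => by
    constructor
    · intro h
      rw [← Finset.univ_sum_single x]
      exact A.sum_mem fun i _ => h i
    · intro hx i
      -- multiply by the `i`-th idempotent, which comes from `∏ Rᵢ`
      have h := A.mul_mem (A.algebraMap_mem (Pi.single i 1)) hx
      rw [hsingle, map_one] at h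
      convert h using 1
      ext j
      rcases eq_or_ne j i with rfl | hj
      · simp
      · simp [hj]
  { toFun := fun A i =>
      { carrier := {x | Pi.single i x ∈ A}
        mul_mem' := fun {x y} hx hy => by
          simpa [Pi.single_mul] using A.mul_mem hx hy
        add_mem' := fun {x y} hx hy => by
          simpa [Pi.single_add] using A.add_mem hx hy
        algebraMap_mem' := fun r => by
          simpa [hsingle] using A.algebraMap_mem (Pi.single i r) }
    invFun := fun B =>
      { carrier := {x | ∀ i, x i ∈ B i}
        mul_mem' := fun hx hy i => (B i).mul_mem (hx i) (hy i)
        add_mem' := fun hx hy i => (B i).add_mem (hx i) (hy i)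
        algebraMap_mem' := fun r i => by
          rw [halg]
          exact (B i).algebraMap_mem _ }
    left_inv := fun A => by
      ext x
      exact hmem A x
    right_inv := fun B => by
      ext i x
      change (∀ j, (Pi.single i x : ∀ i, S i) j ∈ B j) ↔ x ∈ B i
      refine ⟨fun h => by simpa using h i, fun h j => ?_⟩
      rcases eq_or_ne j i with rfl | hj
      · simpa using h
      · simp [hj]
    map_rel_iff' := fun {A B} => by
      refine ⟨fun h x hx => ?_, fun h i x hx => h hx⟩
      rw [← hmem] at hx ⊢
      exact fun i => h i (hx i) }

theorem IsFCPExt.wellFoundedLT {R S : Type*} [CommRing R] [CommRing S] [Algebra R S]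
    (h : IsFCPExt R S) : WellFoundedLT (Subalgebra R S) := by
  refine ⟨RelEmbedding.wellFounded_iff_isEmpty.2 ⟨fun f => ?_⟩⟩
  have hf : StrictAnti f := fun a b hab => f.map_rel_iff.2 hab
  exact Set.infinite_range_of_injective f.injective (h _ hf.antitone.isChain_range)

theorem IsFCPExt.wellFoundedGT {R S : Type*} [CommRing R] [CommRing S] [Algebra R S]
    (h : IsFCPExt R S) : WellFoundedGT (Subalgebra R S) := by
  refine ⟨RelEmbedding.wellFounded_iff_isEmpty.2 ⟨fun f => ?_⟩⟩
  have hf : StrictMono f := fun a b hab => f.map_rel_iff.2 hab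
  exact Set.infinite_range_of_injective f.injective (h _ hf.monotone.isChain_range)

/-- For a finite family of FCP extensions `Rᵢ ⊆ Sᵢ` (`1 ≤ n`), the product
extension `∏ Rᵢ ⊆ ∏ Sᵢ` is catenarian iff each `Rᵢ ⊆ Sᵢ` is; in that case
`ℓ[R,S] = ∑ ℓ[Rᵢ,Sᵢ]`. -/
theorem stmt_4 (n : ℕ) (hn : 1 ≤ n) (R S : Fin n → Type*)
    [∀ i, CommRing (R i)] [∀ i, CommRing (S i)] [∀ i, Algebra (R i) (S i)]
    (hinj : ∀ i, Function.Injective (algebraMap (R i) (S i)))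
    (hFCP : ∀ i, IsFCPExt (R i) (S i)) :
    letI : Algebra (∀ i, R i) (∀ i, S i) :=
      (Pi.ringHom fun i => (algebraMap (R i) (S i)).comp (Pi.evalRingHom R i)).toAlgebra
    ((IsCatenarianExt (∀ i, R i) (∀ i, S i) ↔ ∀ i, IsCatenarianExt (R i) (S i)) ∧
      (IsCatenarianExt (∀ i, R i) (∀ i, S i) →
        extLength (⊥ : Subalgebra (∀ i, R i) (∀ i, S i)) ⊤ =
          ∑ i, extLength (⊥ : Subalgebra (R i) (S i)) ⊤)) := by
  letI : Algebra (∀ i, R i) (∀ i, S i) :=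
    (Pi.ringHom fun i => (algebraMap (R i) (S i)).comp (Pi.evalRingHom R i)).toAlgebra
  have := fun i => (hFCP i).wellFoundedLT
  have := fun i => (hFCP i).wellFoundedGT
  let e := piSubalgebraEquiv R S fun r i => rfl
  have hiff : IsCatenarianExt (∀ i, R i) (∀ i, S i) ↔ ∀ i, IsCatenarianExt (R i) (S i) := by
    unfold IsCatenarianExt
    rw [← e.catenarian_iff, map_bot, map_top]
    exact ⟨catenarian_of_pi, catenarian_pi⟩
  exact ⟨hiff, fun h => extLength_pi e h (hiff.1 h)⟩
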